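/- For every n ≥ 3 and every integer k (with the convention D_{m,j}^* = 0 for j < 0): D_{n,k}^{0,1} = 2(k-1)·D_{n-1,k}^{0,1} + (2n-2k+1)·D_{n-1,k-1}^{0,1} + D_{n-1,k-1}^1 + D_{n-1,k-2}^{≥2} + D_{n-1,k-1}^{0,≥2}. -/

import Mathlib

/-- A signed permutation of `{1,…,n}`, encoded as an (unsigned) permutation of
`Fin n` together with a choice of sign for each position.  The associated
word is `π_1 π_2 ⋯ π_n` where `π_j = ± σ(j)`. -/
abbrev SignedPerm (n : ℕ) := Equiv.Perm (Fin n) × (Fin n → Bool)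

namespace SignedPerm

/-- The letter `π_j` of the word of `p`, for `1 ≤ j ≤ n` (and `0` otherwise). -/
def word {n : ℕ} (p : SignedPerm n) (j : ℕ) : ℤ :=
  if h : 1 ≤ j ∧ j ≤ n then
    (if p.2 ⟨j - 1, by omega⟩ then -1 else 1) * ((p.1 ⟨j - 1, by omega⟩ : ℕ) + 1)
  else 0

/-- The letter `π_j`, with the type `D` convention `π_0 = -π_2`. -/
def entry {n : ℕ} (p : SignedPerm n) (j : ℕ) : ℤ :=
  if j = 0 then -(p.word 2) else p.word j

/-- The set of `D`-descents of `p`: those `i ∈ {0,…,n-1}` with `π_i > π_{i+1}`. -/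
def ddes {n : ℕ} (p : SignedPerm n) : Finset ℕ :=
  (Finset.range n).filter fun i => p.entry (i + 1) < p.entry i

/-- The number of `D`-descents of `p`. -/
def d {n : ℕ} (p : SignedPerm n) : ℕ := p.ddes.card

/-- Membership in the type `D` Coxeter group `D_n ⊆ B_n`:
the number of negative letters is even. -/
def inD {n : ℕ} (p : SignedPerm n) : Prop :=
  Even (Finset.univ.filter (fun i => p.2 i = true)).card

/-- Type '1': descent at position `1` but not at `0`. -/
def type1 {n : ℕ} (p : SignedPerm n) : Prop := 1 ∈ p.ddes ∧ 0 ∉ p.ddes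

/-- Type '0,1': descents at both positions `0` and `1`. -/
def type01 {n : ℕ} (p : SignedPerm n) : Prop := 0 ∈ p.ddes ∧ 1 ∈ p.ddes

/-- Type '≥2': no descent at positions `0` and `1`. -/
def typeGe2 {n : ℕ} (p : SignedPerm n) : Prop := 0 ∉ p.ddes ∧ 1 ∉ p.ddes

/-- Type '0,≥2': descent at position `0` but not at `1`. -/
def type0Ge2 {n : ℕ} (p : SignedPerm n) : Prop := 0 ∈ p.ddes ∧ 1 ∉ p.ddes

instance {n : ℕ} (p : SignedPerm n) : Decidable p.inD := by
  unfold SignedPerm.inD; infer_instance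
instance {n : ℕ} (p : SignedPerm n) : Decidable p.type1 := by
  unfold SignedPerm.type1; infer_instance
instance {n : ℕ} (p : SignedPerm n) : Decidable p.type01 := by
  unfold SignedPerm.type01; infer_instance
instance {n : ℕ} (p : SignedPerm n) : Decidable p.typeGe2 := by
  unfold SignedPerm.typeGe2; infer_instance
instance {n : ℕ} (p : SignedPerm n) : Decidable p.type0Ge2 := by
  unfold SignedPerm.type0Ge2; infer_instance

end SignedPerm

/-- The type `D` Eulerian number `D_{n,k}`: the number of elements of `D_n`
with exactly `k` `D`-descents (zero for `k < 0`). -/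
def eulerD (n : ℕ) (k : ℤ) : ℕ :=
  (Finset.univ.filter fun p : SignedPerm n => p.inD ∧ (p.d : ℤ) = k).card

/-- The sub-Eulerian number `D_{n,k}^1`. -/
def subEuler1 (n : ℕ) (k : ℤ) : ℕ :=
  (Finset.univ.filter fun p : SignedPerm n => p.inD ∧ p.type1 ∧ (p.d : ℤ) = k).card

/-- The sub-Eulerian number `D_{n,k}^{0,1}`. -/
def subEuler01 (n : ℕ) (k : ℤ) : ℕ :=
  (Finset.univ.filter fun p : SignedPerm n => p.inD ∧ p.type01 ∧ (p.d : ℤ) = k).card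

/-- The sub-Eulerian number `D_{n,k}^{≥2}`. -/
def subEulerGe2 (n : ℕ) (k : ℤ) : ℕ :=
  (Finset.univ.filter fun p : SignedPerm n => p.inD ∧ p.typeGe2 ∧ (p.d : ℤ) = k).card

/-- The sub-Eulerian number `D_{n,k}^{0,≥2}`. -/
def subEuler0Ge2 (n : ℕ) (k : ℤ) : ℕ :=
  (Finset.univ.filter fun p : SignedPerm n => p.inD ∧ p.type0Ge2 ∧ (p.d : ℤ) = k).card

/-- The type `D` Eulerian polynomial `D_n(t) = Σ_{π ∈ D_n} t^{d(π)}`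
(with `D_0(t) = D_1(t) = 1`). -/
noncomputable def polyD (n : ℕ) : Polynomial ℚ :=
  ∑ p ∈ Finset.univ.filter (fun p : SignedPerm n => p.inD), Polynomial.X ^ p.d

/-- The sub-Eulerian polynomial `D_n^1(t)`. -/
noncomputable def polyD1 (n : ℕ) : Polynomial ℚ :=
  ∑ p ∈ Finset.univ.filter (fun p : SignedPerm n => p.inD ∧ p.type1), Polynomial.X ^ p.d

/-- The sub-Eulerian polynomial `D_n^{0,1}(t)`. -/
noncomputable def polyD01 (n : ℕ) : Polynomial ℚ :=
  ∑ p ∈ Finset.univ.filter (fun p : SignedPerm n => p.inD ∧ p.type01), Polynomial.X ^ p.d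

/-- The sub-Eulerian polynomial `D_n^{≥2}(t)`. -/
noncomputable def polyDGe2 (n : ℕ) : Polynomial ℚ :=
  ∑ p ∈ Finset.univ.filter (fun p : SignedPerm n => p.inD ∧ p.typeGe2), Polynomial.X ^ p.d

/-- The sub-Eulerian polynomial `D_n^{0,≥2}(t)`. -/
noncomputable def polyD0Ge2 (n : ℕ) : Polynomial ℚ :=
  ∑ p ∈ Finset.univ.filter (fun p : SignedPerm n => p.inD ∧ p.type0Ge2), Polynomial.X ^ p.d

namespace SignedPerm

/-- descent indicator -/
def ai {n : ℕ} (p : SignedPerm n) (i : ℕ) : ℤ :=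
  if p.entry (i + 1) < p.entry i then 1 else 0

lemma ai_eq {n : ℕ} (p : SignedPerm n) (i : ℕ) : p.ai i = 0 ∨ p.ai i = 1 := by
  unfold ai; split_ifs <;> simp

lemma d_eq {n : ℕ} (p : SignedPerm n) : (p.d : ℤ) = ∑ i ∈ Finset.range n, p.ai i := by
  unfold d ddes ai
  rw [Finset.card_filter]; push_cast; rfl

lemma mem_ddes {n : ℕ} (p : SignedPerm n) (i : ℕ) (h : i < n) : i ∈ p.ddes ↔ p.ai i = 1 := by
  unfold ddes ai
  simp [h]

lemma word_bound {n : ℕ} (p : SignedPerm n) (i : ℕ) : -(n : ℤ) ≤ p.word i ∧ p.word i ≤ n := by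
  unfold word
  split_ifs with h h2
  · have := (p.1 ⟨i - 1, by omega⟩).isLt
    constructor <;> push_cast <;> omega
  · have := (p.1 ⟨i - 1, by omega⟩).isLt
    constructor <;> push_cast <;> omega
  · omega

/-- flip the sign of the letter of absolute value one -/
def flip {n : ℕ} (p : SignedPerm n) : SignedPerm n :=
  (p.1, fun i => if (p.1 i : ℕ) = 0 then !p.2 i else p.2 i)

lemma flip_flip {n : ℕ} (p : SignedPerm n) : p.flip.flip = p := by
  unfold flip
  ext i
  · rfl
  · by_cases h : (p.1 i : ℕ) = 0 <;> simp [h]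

lemma word_flip {n : ℕ} (p : SignedPerm n) (j : ℕ) :
    p.flip.word j = if |p.word j| = 1 then - p.word j else p.word j := by
  unfold word flip
  by_cases h : 1 ≤ j ∧ j ≤ n
  · simp only [h, and_self, dite_true]
    obtain ⟨x, hxe⟩ : ∃ x : ℕ, (p.1 ⟨j - 1, by omega⟩ : ℕ) = x := ⟨_, rfl⟩
    simp only [hxe]
    rcases Nat.eq_zero_or_pos x with rfl | hx
    · cases p.2 ⟨j - 1, by omega⟩ <;> simp
    · have h1 : |(x : ℤ) + 1| ≠ 1 := by rw [abs_of_nonneg (by omega)]; omega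
      have h2 : |-1 + -(x : ℤ)| ≠ 1 := by rw [abs_of_nonpos (by omega)]; omega
      have h3 : x ≠ 0 := by omega
      cases p.2 ⟨j - 1, by omega⟩ <;> simp [h1, h2, h3]
  · simp [h]

lemma word_ne {n : ℕ} (p : SignedPerm n) (i j : ℕ) (hi : 1 ≤ i) (hin : i ≤ n) (hj : 1 ≤ j)
    (hjn : j ≤ n) (hij : i ≠ j) : p.word i ≠ 0 ∧ p.word i ≠ p.word j ∧ p.word i ≠ - p.word j := by
  have hne : p.1 ⟨i - 1, by omega⟩ ≠ p.1 ⟨j - 1, by omega⟩ := by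
    intro h
    have := congrArg Fin.val (p.1.injective h)
    simp at this; omega
  have hne : (p.1 ⟨i - 1, by omega⟩ : ℕ) ≠ p.1 ⟨j - 1, by omega⟩ := fun h => hne (Fin.ext h)
  unfold word
  simp only [hi, hin, hj, hjn, and_self, dite_true]
  split_ifs <;> refine ⟨?_, ?_, ?_⟩ <;> push_cast <;> omega

lemma ai_flip {n : ℕ} (hn : 2 ≤ n) (p : SignedPerm n) (i : ℕ) (hi : i < n) :
    p.flip.ai i = p.ai i := by
  have key : p.flip.entry (i+1) < p.flip.entry i ↔ p.entry (i+1) < p.entry i := by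
    unfold entry
    rcases Nat.eq_zero_or_pos i with rfl | h
    · simp only [word_flip]
      have h1 := word_ne p 1 2 (by omega) (by omega) (by omega) (by omega) (by omega)
      have h2 := word_ne p 2 1 (by omega) (by omega) (by omega) (by omega) (by omega)
      simp only [abs_eq (zero_le_one' ℤ)]
      simp only [zero_add, one_ne_zero, if_true, if_false]
      split_ifs <;> omega
    · simp only [word_flip]
      have h1 := word_ne p i (i+1) (by omega) (by omega) (by omega) (by omega) (by omega)
      have h2 := word_ne p (i+1) i (by omega) (by omega) (by omega) (by omega) (by omega)
      have h3 : i ≠ 0 := by omega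
      simp only [abs_eq (zero_le_one' ℤ)]
      simp only [h3, Nat.succ_ne_zero, if_false]
      split_ifs <;> omega
  unfold ai
  simp only [key]

lemma ddes_flip {n : ℕ} (hn : 2 ≤ n) (p : SignedPerm n) : p.flip.ddes = p.ddes := by
  ext i
  by_cases hi : i < n
  · rw [mem_ddes _ _ hi, mem_ddes _ _ hi, ai_flip hn p i hi]
  · simp [ddes, hi]

lemma inD_flip {n : ℕ} (hn : 2 ≤ n) (p : SignedPerm n) : p.flip.inD ↔ ¬ p.inD := by
  unfold inD
  rw [Finset.card_filter, Finset.card_filter]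
  set i0 := p.1.symm ⟨0, by omega⟩ with hi0
  have hz : (p.1 i0 : ℕ) = 0 := by simp [hi0]
  rw [← Finset.add_sum_erase _ _ (Finset.mem_univ i0), ← Finset.add_sum_erase _ _ (Finset.mem_univ i0)]
  have : ∑ x ∈ Finset.univ.erase i0, (if p.flip.2 x = true then 1 else 0)
      = ∑ x ∈ Finset.univ.erase i0, (if p.2 x = true then 1 else 0) := by
    apply Finset.sum_congr rfl
    intro x hx
    have hx' : (p.1 x : ℕ) ≠ 0 := by
      intro h
      apply Finset.ne_of_mem_erase hx
      rw [hi0, Equiv.eq_symm_apply]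
      exact Fin.ext h
    simp [flip, hx']
  rw [this]
  have h2 : p.flip.2 i0 = !p.2 i0 := by simp [flip, hz]
  rw [h2]
  cases p.2 i0 <;> simp [Nat.even_add_one, add_comm 1]

lemma double {n : ℕ} (hn : 2 ≤ n) (Q : SignedPerm n → Prop) [DecidablePred Q]
    (hQ : ∀ p : SignedPerm n, Q p.flip ↔ Q p) :
    2 * ((Finset.univ.filter fun p : SignedPerm n => p.inD ∧ Q p).card : ℤ)
      = ∑ p : SignedPerm n, if Q p then 1 else 0 := by
  have h1 : (Finset.univ.filter fun p : SignedPerm n => p.inD ∧ Q p).card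
      = (Finset.univ.filter fun p : SignedPerm n => ¬ p.inD ∧ Q p).card := by
    apply Finset.card_bij' (fun p _ => p.flip) (fun p _ => p.flip)
    · intro p _; exact flip_flip p
    · intro p _; exact flip_flip p
    · intro p hp; simpa [inD_flip hn, hQ] using hp
    · intro p hp; simpa [inD_flip hn, hQ] using hp
  rw [two_mul]
  nth_rewrite 2 [h1]
  rw [Finset.card_filter, Finset.card_filter]
  push_cast
  rw [← Finset.sum_add_distrib]
  apply Finset.sum_congr rfl
  intro p _
  by_cases h : p.inD <;> by_cases h' : Q p <;> simp [h, h']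

/-- insertion of `± (m+1)` after position `j` -/
def ins {m : ℕ} (x : SignedPerm m × Fin (m + 1) × Bool) : SignedPerm (m + 1) :=
  (((finSuccEquiv' x.2.1).trans (Equiv.optionCongr x.1.1)).trans (finSuccEquiv' (Fin.last m)).symm,
    Fin.insertNth (α := fun _ => Bool) x.2.1 x.2.2 x.1.2)

lemma ins_at {m : ℕ} (p : SignedPerm m) (j : Fin (m+1)) (s : Bool) :
    (ins (p, j, s)).1 j = Fin.last m ∧ (ins (p, j, s)).2 j = s := by
  simp [ins]

lemma ins_succAbove {m : ℕ} (p : SignedPerm m) (j : Fin (m+1)) (s : Bool) (i : Fin m) :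
    (ins (p, j, s)).1 (j.succAbove i) = (p.1 i).castSucc ∧
    (ins (p, j, s)).2 (j.succAbove i) = p.2 i := by
  simp [ins]

lemma ins_inj {m : ℕ} : Function.Injective (ins (m := m)) := by
  rintro ⟨p, j, s⟩ ⟨q, j', s'⟩ h
  have hj : j = j' := by
    apply (ins (q, j', s')).1.injective
    rw [(ins_at q j' s').1, ← h, (ins_at p j s).1]
  subst hj
  have hs : s = s' := by
    rw [← (ins_at p j s).2, h, (ins_at q j s').2]
  subst hs
  have hp : p = q := by
    refine Prod.ext (Equiv.ext fun i => ?_) (funext fun i => ?_)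
    · apply Fin.castSucc_injective
      rw [← (ins_succAbove p j s i).1, h, (ins_succAbove q j s i).1]
    · rw [← (ins_succAbove p j s i).2, h, (ins_succAbove q j s i).2]
  rw [hp]

lemma ins_bij {m : ℕ} : Function.Bijective (ins (m := m)) := by
  rw [Fintype.bijective_iff_injective_and_card]
  refine ⟨ins_inj, ?_⟩
  simp [Fintype.card_perm, Nat.factorial_succ, pow_succ]
  ring

lemma word_ins_lt {m : ℕ} (p : SignedPerm m) (j : Fin (m+1)) (s : Bool) (i : ℕ)
    (hi : i ≤ j) : (ins (p, j, s)).word i = p.word i := by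
  have := j.isLt
  unfold word
  by_cases h : 1 ≤ i
  · have h1 : i ≤ m + 1 := by omega
    have h2 : i ≤ m := by omega
    simp only [h, h1, h2, and_self, dite_true]
    have e : (⟨i - 1, by omega⟩ : Fin (m+1)) = j.succAbove ⟨i - 1, by omega⟩ := by
      rw [Fin.succAbove_of_castSucc_lt]
      · rfl
      · rw [Fin.lt_def]; simp; omega
    rw [e, (ins_succAbove p j s _).1, (ins_succAbove p j s _).2]
    simp
  · simp [h]

lemma word_ins_eq {m : ℕ} (p : SignedPerm m) (j : Fin (m+1)) (s : Bool) :
    (ins (p, j, s)).word (j + 1) = if s then -((m : ℤ) + 1) else m + 1 := by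
  have := j.isLt
  unfold word
  have h1 : (j : ℕ) + 1 ≤ m + 1 := by omega
  simp only [h1, Nat.le_add_left, and_self, dite_true]
  have e : (⟨(j : ℕ) + 1 - 1, by omega⟩ : Fin (m+1)) = j := by
    ext; simp
  rw [e, (ins_at p j s).1, (ins_at p j s).2]
  cases s <;> simp

lemma word_ins_gt {m : ℕ} (p : SignedPerm m) (j : Fin (m+1)) (s : Bool) (i : ℕ)
    (hi : (j : ℕ) < i) (him : i ≤ m) : (ins (p, j, s)).word (i + 1) = p.word i := by
  have := j.isLt
  unfold word
  have h0 : 1 ≤ i := by omega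
  have h1 : i + 1 ≤ m + 1 := by omega
  simp only [h0, h1, him, Nat.le_add_left, and_self, dite_true]
  have e : (⟨i + 1 - 1, by omega⟩ : Fin (m+1)) = j.succAbove ⟨i - 1, by omega⟩ := by
    rw [Fin.succAbove_of_le_castSucc]
    · ext; simp; omega
    · rw [Fin.le_def]; simp; omega
  rw [e, (ins_succAbove p j s _).1, (ins_succAbove p j s _).2]
  simp

lemma sum_ins (a b : ℕ → ℤ) (j m : ℕ) (hj : j < m) (h1 : ∀ i < j, b i = a i)
    (h2 : b j + b (j+1) = 1) (h3 : ∀ i, j < i → i < m → b (i+1) = a i) :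
    ∑ i ∈ Finset.range (m+1), b i = ∑ i ∈ Finset.range m, a i + 1 - a j := by
  induction m, hj using Nat.le_induction with
  | base =>
    rw [Finset.sum_range_succ, Finset.sum_range_succ, Finset.sum_range_succ,
      Finset.sum_congr rfl (fun i hi => h1 i (Finset.mem_range.1 hi))]
    linarith
  | succ m hm ih =>
    rw [Finset.sum_range_succ, ih (fun i h h' => h3 i h (by omega)), Finset.sum_range_succ,
      h3 m (by omega) (by omega)]
    ring

/-- adjacent comparisons away from the start -/
lemma ai_pos {n : ℕ} (p : SignedPerm n) (i : ℕ) (hi : 1 ≤ i) :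
    p.ai i = if p.word (i+1) < p.word i then 1 else 0 := by
  have : i ≠ 0 := by omega
  simp [ai, entry, this]

lemma ai_zero {n : ℕ} (p : SignedPerm n) :
    p.ai 0 = if p.word 1 < - p.word 2 then 1 else 0 := by
  simp [ai, entry]

lemma ai_ins_lt {m : ℕ} (p : SignedPerm m) (j : Fin (m+1)) (s : Bool) (i : ℕ)
    (h2 : 2 ≤ (j : ℕ)) (hi : i < j) : (ins (p, j, s)).ai i = p.ai i := by
  rcases Nat.eq_zero_or_pos i with rfl | h
  · rw [ai_zero, ai_zero, word_ins_lt _ _ _ _ h2, word_ins_lt _ _ _ _ (by omega)]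
  · rw [ai_pos _ _ h, ai_pos _ _ h, word_ins_lt _ _ _ _ (by omega), word_ins_lt _ _ _ _ (by omega)]

lemma ai_ins_eq {m : ℕ} (p : SignedPerm m) (j : Fin (m+1)) (s : Bool)
    (h1 : 1 ≤ (j : ℕ)) : (ins (p, j, s)).ai j = if s then 1 else 0 := by
  have := p.word_bound j
  rw [ai_pos _ _ h1, word_ins_eq, word_ins_lt _ _ _ _ le_rfl]
  cases s <;> simp <;> omega

lemma ai_ins_succ {m : ℕ} (p : SignedPerm m) (j : Fin (m+1)) (s : Bool)
    (h1 : (j : ℕ) < m) : (ins (p, j, s)).ai (j + 1) = if s then 0 else 1 := by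
  have := p.word_bound (j + 1)
  rw [ai_pos _ _ (by omega), word_ins_eq, word_ins_gt _ _ _ _ (by omega) (by omega)]
  cases s <;> simp <;> omega

lemma ai_ins_gt {m : ℕ} (p : SignedPerm m) (j : Fin (m+1)) (s : Bool) (i : ℕ)
    (hi : (j : ℕ) < i) (him : i < m) : (ins (p, j, s)).ai (i + 1) = p.ai i := by
  rw [ai_pos _ _ (by omega), ai_pos _ _ (by omega), word_ins_gt _ _ _ _ (by omega) (by omega),
    word_ins_gt _ _ _ _ (by omega) (by omega)]

lemma d_ins_mid {m : ℕ} (p : SignedPerm m) (j : Fin (m+1)) (s : Bool)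
    (h2 : 2 ≤ (j : ℕ)) (hj : (j : ℕ) < m) : ((ins (p, j, s)).d : ℤ) = p.d + 1 - p.ai j := by
  rw [d_eq, d_eq]
  apply sum_ins _ _ _ _ hj
  · intro i hi; exact ai_ins_lt p j s i h2 hi
  · rw [ai_ins_eq p j s (by omega), ai_ins_succ p j s hj]; cases s <;> simp
  · intro i hi him; exact ai_ins_gt p j s i hi him

lemma d_ins_last {m : ℕ} (p : SignedPerm m) (j : Fin (m+1)) (s : Bool)
    (h2 : 2 ≤ (j : ℕ)) (hj : (j : ℕ) = m) :
    ((ins (p, j, s)).d : ℤ) = p.d + if s then 1 else 0 := by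
  rw [d_eq, d_eq, Finset.sum_range_succ]
  congr 1
  · apply Finset.sum_congr rfl
    intro i hi
    exact ai_ins_lt p j s i h2 (by rw [Finset.mem_range] at hi; omega)
  · have := ai_ins_eq p j s (by omega)
    rwa [hj] at this

lemma ai_ins_one {m : ℕ} (p : SignedPerm m) (j : Fin (m+1)) (s : Bool) (hj : (j : ℕ) = 1) :
    (ins (p, j, s)).ai 0 = if s then 1 else 0 := by
  have := p.word_bound 1
  have h := word_ins_eq p j s
  rw [hj] at h
  rw [ai_zero, h, word_ins_lt _ _ _ _ (by omega)]
  cases s <;> simp <;> omega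

lemma d_ins_one {m : ℕ} (hm : 2 ≤ m) (p : SignedPerm m) (j : Fin (m+1)) (hj : (j : ℕ) = 1) :
    ((ins (p, j, true)).d : ℤ) = p.d + 2 - p.ai 0 - p.ai 1 := by
  have h := sum_ins (fun i => if i = 0 then 1 else p.ai i) (ins (p, j, true)).ai 1 m (by omega)
    (by
      intro i hi
      have : i = 0 := by omega
      subst this
      simpa using ai_ins_one p j true hj)
    (by
      have h1 := ai_ins_eq p j true (by omega)
      have h2 := ai_ins_succ p j true (by omega)
      rw [hj] at h1 h2
      rw [h1, h2]; simp)
    (by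
      intro i hi him
      have : i ≠ 0 := by omega
      simp only [this, if_false]
      exact ai_ins_gt p j true i (by omega) him)
  rw [d_eq, h, d_eq]
  obtain ⟨m, rfl⟩ : ∃ t, m = t + 1 := ⟨m - 1, by omega⟩
  rw [Finset.sum_range_succ', Finset.sum_range_succ']
  simp
  ring

lemma type01_iff {n : ℕ} (hn : 2 ≤ n) (p : SignedPerm n) :
    p.type01 ↔ p.ai 0 = 1 ∧ p.ai 1 = 1 := by
  unfold type01
  rw [mem_ddes _ _ (by omega), mem_ddes _ _ (by omega)]

lemma type01_ins_ge {m : ℕ} (hm : 2 ≤ m) (p : SignedPerm m) (j : Fin (m+1)) (s : Bool)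
    (h2 : 2 ≤ (j : ℕ)) : (ins (p, j, s)).type01 ↔ p.type01 := by
  rw [type01_iff (by omega), type01_iff hm, ai_ins_lt p j s 0 h2 (by omega),
    ai_ins_lt p j s 1 h2 (by omega)]

lemma type01_ins_one {m : ℕ} (hm : 2 ≤ m) (p : SignedPerm m) (j : Fin (m+1)) (s : Bool)
    (hj : (j : ℕ) = 1) : (ins (p, j, s)).type01 ↔ s = true := by
  have h1 := ai_ins_eq p j s (by omega)
  rw [hj] at h1
  rw [type01_iff (by omega), ai_ins_one p j s hj, h1]
  cases s <;> simp

lemma type01_ins_zero {m : ℕ} (hm : 2 ≤ m) (p : SignedPerm m) (j : Fin (m+1)) (s : Bool)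
    (hj : (j : ℕ) = 0) : ¬ (ins (p, j, s)).type01 := by
  have h1 := word_ins_eq p j s
  have h2 := word_ins_gt p j s 1 (by omega) (by omega)
  have := p.word_bound 1
  rw [hj, zero_add] at h1
  rw [type01_iff (by omega), ai_zero, ai_pos _ _ le_rfl, h1, h2]
  cases s <;> simp <;> omega

/-- the per-permutation count -/
lemma count {m : ℕ} (hm : 2 ≤ m) (p : SignedPerm m) (k : ℤ) :
    ∑ js : Fin (m+1) × Bool,
      (if (ins (p, js)).type01 ∧ ((ins (p, js)).d : ℤ) = k then (1:ℤ) else 0) =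
    2 * (k - 1) * (if p.type01 ∧ (p.d : ℤ) = k then 1 else 0)
    + (2 * ((m + 1 : ℕ) : ℤ) - 2 * k + 1) * (if p.type01 ∧ (p.d : ℤ) = k - 1 then 1 else 0)
    + (if p.type1 ∧ (p.d : ℤ) = k - 1 then 1 else 0)
    + (if p.typeGe2 ∧ (p.d : ℤ) = k - 2 then 1 else 0)
    + (if p.type0Ge2 ∧ (p.d : ℤ) = k - 1 then 1 else 0) := by
  rw [Fintype.sum_prod_type]
  simp only [Fintype.sum_bool]
  let g : ℕ → ℤ := fun j =>
    if j = 0 then 0 else if j = 1 then (if (p.d : ℤ) + 2 - p.ai 0 - p.ai 1 = k then 1 else 0)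
    else if j < m then 2 * (if p.type01 ∧ (p.d : ℤ) + 1 - p.ai j = k then 1 else 0)
    else (if p.type01 ∧ (p.d : ℤ) + 1 = k then 1 else 0) + (if p.type01 ∧ (p.d : ℤ) = k then 1 else 0)
  have hg : ∀ j : Fin (m+1),
      ((if (ins (p, j, true)).type01 ∧ ((ins (p, j, true)).d : ℤ) = k then (1:ℤ) else 0) +
      (if (ins (p, j, false)).type01 ∧ ((ins (p, j, false)).d : ℤ) = k then (1:ℤ) else 0))
       = g j := by
    intro j
    by_cases h0 : (j : ℕ) = 0
    · simp [g, h0, type01_ins_zero hm p j _ h0]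
    by_cases h1 : (j : ℕ) = 1
    · simp only [type01_ins_one hm p j _ h1, d_ins_one hm p j h1]
      simp [g, h1]
    by_cases h2 : (j : ℕ) < m
    · simp only [type01_ins_ge hm p j _ (by omega), d_ins_mid p j _ (by omega) h2]
      simp only [g, h0, h1, h2, if_true, if_false]
      ring
    · have := j.isLt
      simp only [type01_ins_ge hm p j _ (by omega), d_ins_last p j _ (by omega) (by omega : (j:ℕ) = m)]
      simp [g, h0, h1, h2]
  rw [Finset.sum_congr rfl (fun j _ => hg j), Fin.sum_univ_eq_sum_range]
  have hd := p.d_eq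
  obtain ⟨t, rfl⟩ : ∃ t, m = t + 2 := ⟨m - 2, by omega⟩
  rw [Finset.sum_range_succ', Finset.sum_range_succ'] at hd
  rw [Finset.sum_range_succ, Finset.sum_range_succ', Finset.sum_range_succ']
  have e0 : g 0 = 0 := rfl
  have e1 : g (0 + 1) = (if (p.d : ℤ) + 2 - p.ai 0 - p.ai 1 = k then 1 else 0) := rfl
  have e2 : g (t + 2) = (if p.type01 ∧ (p.d : ℤ) + 1 = k then 1 else 0)
      + (if p.type01 ∧ (p.d : ℤ) = k then 1 else 0) := by simp [g]
  have e3 : ∑ i ∈ Finset.range t, g (i + 1 + 1) =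
      ∑ i ∈ Finset.range t, (p.ai (i+1+1) * (2 * (if p.type01 ∧ (p.d : ℤ) = k then 1 else 0))
        + (1 - p.ai (i+1+1)) * (2 * (if p.type01 ∧ (p.d : ℤ) + 1 = k then 1 else 0))) := by
    apply Finset.sum_congr rfl
    intro i hi
    rw [Finset.mem_range] at hi
    have hlt : i + 1 + 1 < t + 2 := by omega
    simp only [g, hlt, if_true, Nat.succ_ne_zero, if_false, Nat.add_eq_right]
    rcases p.ai_eq (i+1+1) with h | h <;> simp [h]
  rw [Finset.sum_add_distrib, ← Finset.sum_mul, ← Finset.sum_mul, Finset.sum_sub_distrib] at e3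
  rw [e0, e1, e2, e3]
  simp only [type01_iff hm, type1, typeGe2, type0Ge2]
  simp only [mem_ddes p 0 (by omega), mem_ddes p 1 (by omega)]
  simp only [Finset.sum_const, Finset.card_range, nsmul_eq_mul, mul_one]
  generalize (p.d : ℤ) = D at *
  generalize ∑ i ∈ Finset.range t, p.ai (i+1+1) = S at *
  rw [zero_add] at hd
  push_cast
  rcases p.ai_eq 0 with h0 | h0 <;> rcases p.ai_eq 1 with h1 | h1 <;>
    simp only [h0, h1] at hd ⊢ <;> simp
  · congr 1; apply propext; omega
  · congr 1; apply propext; omega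
  · congr 1; apply propext; omega
  · subst hd
    have hc : S + 1 + 1 + 2 - 1 - 1 = S + 1 + 1 := by ring
    rw [hc]
    by_cases hk : S + 1 + 1 = k
    · subst hk
      simp
      ring
    · by_cases hk' : S + 1 + 1 + 1 = k
      · subst hk'
        simp
        ring
      · have : ¬ (S + 1 + 1 = k - 1) := by omega
        simp [*]

end SignedPerm

/-- **Proposition 3.2 (ii).** Recurrence for the sub-Eulerian numbers `D_{n,k}^{0,1}`. -/
theorem subEuler01_recurrence (n : ℕ) (hn : 3 ≤ n) (k : ℤ) :
    (subEuler01 n k : ℤ) =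
      2 * (k - 1) * subEuler01 (n - 1) k
        + (2 * (n : ℤ) - 2 * k + 1) * subEuler01 (n - 1) (k - 1)
        + subEuler1 (n - 1) (k - 1) + subEulerGe2 (n - 1) (k - 2)
        + subEuler0Ge2 (n - 1) (k - 1) := by
  obtain ⟨m, rfl⟩ : ∃ m, n = m + 1 := ⟨n - 1, by omega⟩
  rw [Nat.add_sub_cancel]
  have hm : 2 ≤ m := by omega
  have A1 := fun (n : ℕ) (h : 2 ≤ n) (k : ℤ) => SignedPerm.double h
    (fun p : SignedPerm n => p.type01 ∧ (p.d : ℤ) = k)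
    (fun p => by simp only [SignedPerm.type01, SignedPerm.d, SignedPerm.ddes_flip h])
  have A2 := SignedPerm.double hm (fun p : SignedPerm m => p.type1 ∧ (p.d : ℤ) = k - 1)
    (fun p => by simp only [SignedPerm.type1, SignedPerm.d, SignedPerm.ddes_flip hm])
  have A3 := SignedPerm.double hm (fun p : SignedPerm m => p.typeGe2 ∧ (p.d : ℤ) = k - 2)
    (fun p => by simp only [SignedPerm.typeGe2, SignedPerm.d, SignedPerm.ddes_flip hm])
  have A4 := SignedPerm.double hm (fun p : SignedPerm m => p.type0Ge2 ∧ (p.d : ℤ) = k - 1)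
    (fun p => by simp only [SignedPerm.type0Ge2, SignedPerm.d, SignedPerm.ddes_flip hm])
  have B1 := A1 (m+1) (by omega) k
  have B2 := A1 m hm k
  have B3 := A1 m hm (k - 1)
  rw [← SignedPerm.ins_bij.sum_comp, Fintype.sum_prod_type,
    Finset.sum_congr rfl (fun p _ => SignedPerm.count hm p k)] at B1
  simp only [Finset.sum_add_distrib, ← Finset.mul_sum] at B1
  rw [← B2, ← B3, ← A2, ← A3, ← A4] at B1
  unfold subEuler01 subEuler1 subEulerGe2 subEuler0Ge2
  linarith
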